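/- arXiv:2202.10703 — 3 statements merged into one kernel-verified Lean document; each statement's English description precedes it below -/
import Mathlib

section
/- Let a, b, c > 0 and let f(Q) = C − (a/2)tr(Q²) − (b/3)tr(Q³) + (c/4)(tr(Q²))² on Sym₀, with C chosen so that min f = 0. Then f(Q) = 0 if and only if Q = s*(n⊗n − (1/3)I) for some unit vector n ∈ ℝ³, where s* = (b + √(b² + 24ac))/(4c). In particular the zero set f⁻¹(0) equals 𝒩. -/
/- STATEMENT 0: Let a, b, c > 0 and f(Q) = C − (a/2)tr(Q²) − (b/3)tr(Q³) + (c/4)(tr(Q²))²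
on Sym₀ (symmetric traceless 3×3 real matrices), with C chosen so that min f = 0.
Then f(Q) = 0 iff Q = s*(n⊗n − (1/3)I) for some unit n ∈ ℝ³, s* = (b + √(b²+24ac))/(4c);
in particular f⁻¹(0) = 𝒩. -/

noncomputable section

open Matrix

abbrev Mat3 : Type := Matrix (Fin 3) (Fin 3) ℝ

/-- Symmetric traceless 3×3 real matrices. -/
def Sym0 : Set Mat3 := {Q | Q.IsSymm ∧ Q.trace = 0}

def unitVec (n : Fin 3 → ℝ) : Prop := ∑ i, (n i) ^ 2 = 1

/-- `s (n⊗n − (1/3) Id)`. -/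
def uniax (s : ℝ) (n : Fin 3 → ℝ) : Mat3 :=
  s • (Matrix.vecMulVec n n - (1 / 3 : ℝ) • (1 : Mat3))

def sStar (a b c : ℝ) : ℝ := (b + Real.sqrt (b ^ 2 + 24 * a * c)) / (4 * c)

/-- The Landau-de Gennes bulk potential. -/
def fLdG (a b c C : ℝ) (Q : Mat3) : ℝ :=
  C - a / 2 * (Q * Q).trace - b / 3 * (Q * Q * Q).trace + c / 4 * ((Q * Q).trace) ^ 2

/-- The vacuum manifold 𝒩 = { s (n⊗n − Id/3) : |n| = 1 }. -/
def NsetM (s : ℝ) : Set Mat3 := {Q | ∃ n, unitVec n ∧ Q = uniax s n}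

/-!
On traceless symmetric matrices the discriminant of the characteristic polynomial gives
`6 (tr Q³)² ≤ (tr Q²)³`. Writing `tr Q² = (2/3) r²` with `r ≥ 0`, this says `tr Q³ ≤ (2/9) r³`, so
the potential is bounded below by its value `C + g(r)` on the uniaxial matrices `r (n⊗n − I/3)`,
where `g` is a quartic polynomial. Since `s*` is a critical point of `g`, the difference
`g(r) − g(s*)` is `(r − s*)²` times a quadratic factor, which is positive on `r ≥ 0`; hence `s*` is
the strict minimiser. In the equality case the characteristic polynomial of `Q` is
`(X − 2s*/3) (X + s*/3)²`, and the spectral theorem recovers the unit vector `n`.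
-/

section Hermitian

variable {𝕜 ι : Type*} [RCLike 𝕜] [Fintype ι] [DecidableEq ι] {A : Matrix ι ι 𝕜}

lemma trace_pow_eq_sum_eigenvalues_pow (hA : A.IsHermitian) (m : ℕ) :
    (A ^ m).trace = ∑ i, (hA.eigenvalues i : 𝕜) ^ m := by
  conv_lhs => rw [hA.spectral_theorem, ← map_pow, diagonal_pow, Unitary.conjStarAlgAut_apply,
    trace_mul_comm, ← Matrix.mul_assoc, Unitary.coe_star_mul_self, Matrix.one_mul, trace_diagonal]
  rfl

lemma unitary_conj_single_eq_vecMulVec (U : unitaryGroup ι 𝕜) (k : ι) :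
    Unitary.conjStarAlgAut 𝕜 _ U (single k k 1) =
      vecMulVec (fun i => U i k) (star fun i => U i k) := by
  rw [Unitary.conjStarAlgAut_apply, single_eq_single_vecMulVec_single, mul_vecMulVec,
    vecMulVec_mul, mulVec_single_one, single_one_vecMul]
  rfl

lemma eq_smul_vecMulVec_add_smul_one_of_eigenvalues_eq (hA : A.IsHermitian) (k : ι) {β : ℝ}
    (hβ : ∀ i ≠ k, hA.eigenvalues i = β) :
    A = ((hA.eigenvalues k - β : ℝ) : 𝕜) •
        vecMulVec (hA.eigenvectorBasis k) (star ⇑(hA.eigenvectorBasis k)) + (β : 𝕜) • 1 := by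
  have diagonal_eq : diagonal (RCLike.ofReal ∘ hA.eigenvalues) =
      ((hA.eigenvalues k - β : ℝ) : 𝕜) • single k k (1 : 𝕜) + (β : 𝕜) • 1 := by
    ext i j
    rcases eq_or_ne i j with rfl | hij
    · rcases eq_or_ne i k with rfl | hik
      · simp [RCLike.real_smul_eq_coe_mul]
      · simp [hβ i hik, hik.symm, RCLike.real_smul_eq_coe_mul]
    · have hk : ¬(k = i ∧ k = j) := fun h => hij (h.1.symm.trans h.2)
      simp [hij, hk]
  conv_lhs => rw [hA.spectral_theorem, diagonal_eq, map_add, map_smul, map_smul, map_one,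
    unitary_conj_single_eq_vecMulVec]
  rfl

end Hermitian

section TracelessTriple

variable {d : Fin 3 → ℝ}

-- The difference of the two sides is twice the discriminant `∏ i < j, (d i - d j) ^ 2`.
lemma six_mul_sum_cube_sq_le_sum_sq_cube (h1 : ∑ i, d i = 0) :
    6 * (∑ i, d i ^ 3) ^ 2 ≤ (∑ i, d i ^ 2) ^ 3 := by
  simp only [Fin.sum_univ_three] at h1 ⊢
  have hd : d 2 = -d 0 - d 1 := by linarith
  rw [hd]
  linear_combination 2 * sq_nonneg ((d 0 - d 1) * (2 * d 0 + d 1) * (d 0 + 2 * d 1))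

-- Newton's identities for the characteristic polynomial with roots `d 0, d 1, d 2`.
lemma cube_eq_of_sum_eq_zero (h1 : ∑ i, d i = 0) (i : Fin 3) :
    d i ^ 3 = (∑ j, d j ^ 2) / 2 * d i + (∑ j, d j ^ 3) / 3 := by
  simp only [Fin.sum_univ_three] at h1 ⊢
  have hd : d 2 = -d 0 - d 1 := by linarith
  fin_cases i <;> simp only [Fin.zero_eta, Fin.mk_one, Fin.reduceFinMk, hd] <;> ring

lemma exists_eq_two_thirds_and_forall_ne_eq_neg_third {s : ℝ} (h1 : ∑ i, d i = 0)
    (h2 : ∑ i, d i ^ 2 = 2 / 3 * s ^ 2) (h3 : ∑ i, d i ^ 3 = 2 / 9 * s ^ 3) :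
    ∃ k, d k = 2 / 3 * s ∧ ∀ i ≠ k, d i = -(s / 3) := by
  have root (i) : (d i - 2 / 3 * s) * (d i + s / 3) ^ 2 = 0 := by
    have := cube_eq_of_sum_eq_zero h1 i
    rw [h2, h3] at this
    linear_combination this
  obtain ⟨k, hk⟩ : ∃ k, d k = 2 / 3 * s := by
    by_contra! hne
    have all_eq (i) : d i = -(s / 3) := by
      have := pow_eq_zero_iff two_ne_zero |>.1 <|
        (mul_eq_zero.1 (root i)).resolve_left (sub_ne_zero.2 (hne i))
      linarith
    have hs : s = 0 := by simpa [all_eq] using h1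
    exact hne 0 (by simp [all_eq, hs])
  have sum_sq : ∑ i, (d i + s / 3) ^ 2 = s ^ 2 := by
    simp only [Fin.sum_univ_three] at h1 h2 ⊢
    linear_combination h2 + 2 / 3 * s * h1
  have sum_sq_erase : ∑ i ∈ Finset.univ.erase k, (d i + s / 3) ^ 2 = 0 := by
    have := Finset.add_sum_erase _ (fun i => (d i + s / 3) ^ 2) (Finset.mem_univ k)
    rw [sum_sq, hk] at this
    linear_combination this
  refine ⟨k, hk, fun i hi => eq_neg_of_add_eq_zero_left ?_⟩
  exact pow_eq_zero_iff two_ne_zero |>.1 <|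
    (Finset.sum_eq_zero_iff_of_nonneg fun _ _ => sq_nonneg _).1 sum_sq_erase i (by simp [hi])

end TracelessTriple

section Uniaxial

variable {s : ℝ} {n : Fin 3 → ℝ} {Q : Mat3}

lemma unitVec_iff_dotProduct_self : unitVec n ↔ n ⬝ᵥ n = 1 := by
  simp only [unitVec, dotProduct, sq]

lemma uniax_mem_Sym0 (s : ℝ) (hn : unitVec n) : uniax s n ∈ Sym0 := by
  constructor
  · simp [uniax, IsSymm, transpose_vecMulVec]
  · simp [uniax, trace_vecMulVec, unitVec_iff_dotProduct_self.1 hn]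

lemma uniax_mul_self (s : ℝ) (hn : unitVec n) :
    uniax s n * uniax s n = (s / 3) • uniax s n + (2 / 9 * s ^ 2) • 1 := by
  have hP : vecMulVec n n * vecMulVec n n = vecMulVec n n := by
    rw [vecMulVec_mul_vecMulVec, unitVec_iff_dotProduct_self.1 hn, one_smul]
  simp only [uniax, Matrix.smul_mul, Matrix.mul_smul, Matrix.sub_mul, Matrix.mul_sub, hP,
    Matrix.mul_one, Matrix.one_mul]
  module

lemma trace_uniax_mul_self (s : ℝ) (hn : unitVec n) :
    (uniax s n * uniax s n).trace = 2 / 3 * s ^ 2 := by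
  rw [uniax_mul_self s hn, trace_add, trace_smul, trace_smul, (uniax_mem_Sym0 s hn).2,
    trace_one]
  simp only [smul_eq_mul, Fintype.card_fin, Nat.cast_ofNat]
  ring

lemma trace_uniax_mul_self_mul_self (s : ℝ) (hn : unitVec n) :
    (uniax s n * uniax s n * uniax s n).trace = 2 / 9 * s ^ 3 := by
  rw [uniax_mul_self s hn, Matrix.add_mul, Matrix.smul_mul, Matrix.smul_mul, Matrix.one_mul,
    trace_add, trace_smul, trace_smul, trace_uniax_mul_self s hn, (uniax_mem_Sym0 s hn).2]
  simp only [smul_eq_mul]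
  ring

lemma exists_isHermitian_sum_eigenvalues_pow_eq_trace (hQ : Q ∈ Sym0) : ∃ hQ' : Q.IsHermitian,
    ∑ i, hQ'.eigenvalues i = 0 ∧ ∑ i, hQ'.eigenvalues i ^ 2 = (Q * Q).trace ∧
      ∑ i, hQ'.eigenvalues i ^ 3 = (Q * Q * Q).trace := by
  have hQ' : Q.IsHermitian := isHermitian_iff_isSymm.2 hQ.1
  refine ⟨hQ', ?_, ?_, ?_⟩
  · simpa using hQ'.trace_eq_sum_eigenvalues.symm.trans hQ.2
  · simpa [sq] using (trace_pow_eq_sum_eigenvalues_pow hQ' 2).symm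
  · simpa [pow_three'] using (trace_pow_eq_sum_eigenvalues_pow hQ' 3).symm

lemma six_mul_trace_cube_sq_le_trace_sq_cube (hQ : Q ∈ Sym0) :
    6 * (Q * Q * Q).trace ^ 2 ≤ (Q * Q).trace ^ 3 := by
  obtain ⟨_, h1, h2, h3⟩ := exists_isHermitian_sum_eigenvalues_pow_eq_trace hQ
  rw [← h2, ← h3]
  exact six_mul_sum_cube_sq_le_sum_sq_cube h1

theorem exists_eq_uniax_iff_trace (hQ : Q ∈ Sym0) :
    (∃ n, unitVec n ∧ Q = uniax s n) ↔
      (Q * Q).trace = 2 / 3 * s ^ 2 ∧ (Q * Q * Q).trace = 2 / 9 * s ^ 3 := by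
  constructor
  · rintro ⟨n, hn, rfl⟩
    exact ⟨trace_uniax_mul_self s hn, trace_uniax_mul_self_mul_self s hn⟩
  · rintro ⟨trace_sq, trace_cube⟩
    obtain ⟨hQ', h1, h2, h3⟩ := exists_isHermitian_sum_eigenvalues_pow_eq_trace hQ
    obtain ⟨k, hk, hne⟩ :=
      exists_eq_two_thirds_and_forall_ne_eq_neg_third h1 (h2.trans trace_sq) (h3.trans trace_cube)
    refine ⟨hQ'.eigenvectorBasis k, ?_, ?_⟩
    · rw [unitVec, ← EuclideanSpace.real_norm_sq_eq, hQ'.eigenvectorBasis.norm_eq_one, one_pow]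
    · have decomposition := eq_smul_vecMulVec_add_smul_one_of_eigenvalues_eq hQ' k hne
      simp only [hk, star_trivial, RCLike.ofReal_real_eq_id, id] at decomposition
      refine decomposition.trans ?_
      rw [uniax]
      module

end Uniaxial

section ScalarOrder

variable {Q : Mat3}

/-- The amplitude `√(3/2) |Q|` of `Q`, normalised so that the amplitude of `uniax s n` is `|s|` for
a unit vector `n`. -/
def scalarOrder (Q : Mat3) : ℝ := √(3 / 2 * (Q * Q).trace)

lemma scalarOrder_nonneg (Q : Mat3) : 0 ≤ scalarOrder Q := Real.sqrt_nonneg _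

lemma trace_mul_self_eq_scalarOrder_sq (hQ : Q.IsSymm) :
    (Q * Q).trace = 2 / 3 * scalarOrder Q ^ 2 := by
  have trace_nonneg : 0 ≤ (Q * Q).trace := by
    simpa [hQ.eq] using (posSemidef_conjTranspose_mul_self Q).trace_nonneg
  rw [scalarOrder, Real.sq_sqrt (by positivity)]
  ring

lemma trace_cube_le_scalarOrder_cube (hQ : Q ∈ Sym0) :
    (Q * Q * Q).trace ≤ 2 / 9 * scalarOrder Q ^ 3 := by
  have hr := scalarOrder_nonneg Q
  have hle := six_mul_trace_cube_sq_le_trace_sq_cube hQ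
  rw [trace_mul_self_eq_scalarOrder_sq hQ.1] at hle
  exact le_of_sq_le_sq (by linear_combination hle / 6) (by positivity)

end ScalarOrder

section UniaxialEnergy

variable {a b c r s : ℝ}

/-- The bulk potential without its additive constant, restricted to the uniaxial matrices
`r (n⊗n − I/3)`, as a function of `r`. -/
def uniaxialEnergy (a b c r : ℝ) : ℝ := c / 9 * r ^ 4 - 2 * b / 27 * r ^ 3 - a / 3 * r ^ 2

lemma uniaxialEnergy_sub_eq_sq_mul (hs : 2 * c * s ^ 2 = b * s + 3 * a) :
    uniaxialEnergy a b c r - uniaxialEnergy a b c s =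
      (r - s) ^ 2 * (c / 9 * r ^ 2 + 2 / 27 * (3 * c * s - b) * (r + s / 2)) := by
  unfold uniaxialEnergy
  linear_combination (r ^ 2 - s ^ 2) / 9 * hs

lemma uniaxialEnergy_lt (hc : 0 < c) (hs : 0 < s) (hcrit : 2 * c * s ^ 2 = b * s + 3 * a)
    (hb : b < 3 * c * s) (hr : 0 ≤ r) (hne : r ≠ s) :
    uniaxialEnergy a b c s < uniaxialEnergy a b c r := by
  have : 0 < 3 * c * s - b := sub_pos.2 hb
  have : 0 < (r - s) ^ 2 := sq_pos_of_ne_zero (sub_ne_zero.2 hne)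
  rw [← sub_pos, uniaxialEnergy_sub_eq_sq_mul hcrit]
  positivity

end UniaxialEnergy

section BulkPotential

variable {a b c C r : ℝ} {Q : Mat3}

lemma sStar_pos (hb : 0 < b) (hc : 0 < c) : 0 < sStar a b c := by
  unfold sStar
  positivity

lemma two_mul_sStar_sq (hc : c ≠ 0) (hdisc : 0 ≤ b ^ 2 + 24 * a * c) :
    2 * c * sStar a b c ^ 2 = b * sStar a b c + 3 * a := by
  have hsq := Real.sq_sqrt hdisc
  unfold sStar
  set root := √(b ^ 2 + 24 * a * c)
  field_simp
  linear_combination 2 * hsq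

lemma lt_three_mul_sStar (hc : 0 < c) (hac : 0 < b ^ 2 + 27 * a * c) :
    b < 3 * c * sStar a b c := by
  have lt_sqrt : b / 3 < √(b ^ 2 + 24 * a * c) := Real.lt_sqrt_of_sq_lt (by linarith)
  have : 3 * c * sStar a b c = 3 / 4 * (b + √(b ^ 2 + 24 * a * c)) := by
    unfold sStar
    field_simp
  linarith

-- At `27 a c = -b ^ 2` the isotropic state `r = 0` has the same energy as `r = sStar a b c`.
lemma uniaxialEnergy_sStar_lt (hb : 0 < b) (hc : 0 < c) (hac : 0 < b ^ 2 + 27 * a * c)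
    (hr : 0 ≤ r) (hne : r ≠ sStar a b c) :
    uniaxialEnergy a b c (sStar a b c) < uniaxialEnergy a b c r :=
  uniaxialEnergy_lt hc (sStar_pos hb hc)
    (two_mul_sStar_sq hc.ne' (by linarith [sq_nonneg b])) (lt_three_mul_sStar hc hac) hr hne

lemma fLdG_eq_add_uniaxialEnergy (hQ : Q.IsSymm) :
    fLdG a b c C Q = C + uniaxialEnergy a b c (scalarOrder Q) +
      b / 3 * (2 / 9 * scalarOrder Q ^ 3 - (Q * Q * Q).trace) := by
  rw [fLdG, uniaxialEnergy, trace_mul_self_eq_scalarOrder_sq hQ]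
  ring

lemma fLdG_uniax (s : ℝ) {n : Fin 3 → ℝ} (hn : unitVec n) :
    fLdG a b c C (uniax s n) = C + uniaxialEnergy a b c s := by
  rw [fLdG, uniaxialEnergy, trace_uniax_mul_self s hn, trace_uniax_mul_self_mul_self s hn]
  ring

lemma add_uniaxialEnergy_scalarOrder_le_fLdG (hb : 0 ≤ b) (hQ : Q ∈ Sym0) :
    C + uniaxialEnergy a b c (scalarOrder Q) ≤ fLdG a b c C Q := by
  rw [fLdG_eq_add_uniaxialEnergy hQ.1]
  have := sub_nonneg.2 (trace_cube_le_scalarOrder_cube hQ)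
  exact le_add_of_nonneg_right (by positivity)

lemma add_uniaxialEnergy_sStar_le_fLdG (hb : 0 < b) (hc : 0 < c) (hac : 0 < b ^ 2 + 27 * a * c)
    (hQ : Q ∈ Sym0) : C + uniaxialEnergy a b c (sStar a b c) ≤ fLdG a b c C Q := by
  refine le_trans ?_ (add_uniaxialEnergy_scalarOrder_le_fLdG hb.le hQ)
  rcases eq_or_ne (scalarOrder Q) (sStar a b c) with heq | hne
  · rw [heq]
  · gcongr
    exact (uniaxialEnergy_sStar_lt hb hc hac (scalarOrder_nonneg Q) hne).le

lemma isLeast_fLdG_image_Sym0 (hb : 0 < b) (hc : 0 < c) (hac : 0 < b ^ 2 + 27 * a * c) :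
    IsLeast (fLdG a b c C '' Sym0) (C + uniaxialEnergy a b c (sStar a b c)) := by
  constructor
  · have hn : unitVec ![1, 0, 0] := by simp [unitVec, Fin.sum_univ_three]
    exact ⟨uniax (sStar a b c) ![1, 0, 0], uniax_mem_Sym0 _ hn, fLdG_uniax _ hn⟩
  · rintro _ ⟨Q, hQ, rfl⟩
    exact add_uniaxialEnergy_sStar_le_fLdG hb hc hac hQ

lemma fLdG_eq_min_iff_exists_eq_uniax (hb : 0 < b) (hc : 0 < c) (hac : 0 < b ^ 2 + 27 * a * c)
    (hQ : Q ∈ Sym0) : fLdG a b c C Q = C + uniaxialEnergy a b c (sStar a b c) ↔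
      ∃ n, unitVec n ∧ Q = uniax (sStar a b c) n := by
  constructor
  · intro hmin
    have order_eq : scalarOrder Q = sStar a b c := by
      by_contra hne
      have := uniaxialEnergy_sStar_lt hb hc hac (scalarOrder_nonneg Q) hne
      have := add_uniaxialEnergy_scalarOrder_le_fLdG (a := a) (c := c) (C := C) hb.le hQ
      linarith
    refine (exists_eq_uniax_iff_trace hQ).2 ⟨?_, ?_⟩
    · rw [trace_mul_self_eq_scalarOrder_sq hQ.1, order_eq]
    · rw [fLdG_eq_add_uniaxialEnergy hQ.1, order_eq, add_eq_left] at hmin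
      have := (mul_eq_zero.1 hmin).resolve_left (by positivity)
      linarith
  · rintro ⟨n, hn, rfl⟩
    exact fLdG_uniax _ hn

end BulkPotential

theorem statement0_general (a b c C : ℝ) (hb : 0 < b) (hc : 0 < c)
    (hac : 0 < b ^ 2 + 27 * a * c) (hC : IsLeast (fLdG a b c C '' Sym0) 0) :
    (∀ Q ∈ Sym0, (fLdG a b c C Q = 0 ↔ ∃ n, unitVec n ∧ Q = uniax (sStar a b c) n)) ∧
    {Q ∈ Sym0 | fLdG a b c C Q = 0} = NsetM (sStar a b c) := by
  have zero_iff : ∀ Q ∈ Sym0,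
      (fLdG a b c C Q = 0 ↔ ∃ n, unitVec n ∧ Q = uniax (sStar a b c) n) := by
    rw [hC.unique (isLeast_fLdG_image_Sym0 hb hc hac)]
    exact fun Q hQ => fLdG_eq_min_iff_exists_eq_uniax hb hc hac hQ
  refine ⟨zero_iff, Set.ext fun Q => ⟨fun ⟨hQ, hzero⟩ => (zero_iff Q hQ).1 hzero, ?_⟩⟩
  rintro ⟨n, hn, rfl⟩
  have hmem := uniax_mem_Sym0 (sStar a b c) hn
  exact ⟨hmem, (zero_iff _ hmem).2 ⟨n, hn, rfl⟩⟩

theorem statement0 (a b c C : ℝ) (ha : 0 < a) (hb : 0 < b) (hc : 0 < c)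
    (hC : IsLeast (fLdG a b c C '' Sym0) 0) :
    (∀ Q ∈ Sym0, (fLdG a b c C Q = 0 ↔ ∃ n, unitVec n ∧ Q = uniax (sStar a b c) n)) ∧
    {Q ∈ Sym0 | fLdG a b c C Q = 0} = NsetM (sStar a b c) := by
  exact statement0_general a b c C hb hc (by positivity) hC
end
end

section
/- There exist constants C₁, C₂ > 0 such that for every Q ∈ Sym₀ the radial derivative of f satisfies Df(Q):Q ≥ C₁|Q|⁴ − C₂, where Df(Q):Q = −a·tr(Q²) − b·tr(Q³) + c·(tr(Q²))² is the derivative of f at Q applied to Q itself. -/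
/- STATEMENT 3: There exist C₁, C₂ > 0 such that for every Q ∈ Sym₀,
Df(Q):Q = −a·tr(Q²) − b·tr(Q³) + c·(tr(Q²))² ≥ C₁|Q|⁴ − C₂, where |Q|⁴ = (tr(Q²))². -/

noncomputable section

open Matrix

/-!
By Cauchy–Schwarz and submultiplicativity of the Frobenius norm, `|tr Q³| ≤ |Q|³`, while
`tr Q² = |Q|²` for symmetric `Q`. Hence `Df(Q):Q` is bounded below by a quartic polynomial in `|Q|`
with leading coefficient `c > 0`, and Young's inequality absorbs its lower-order terms.
-/

section FrobeniusNorm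

open scoped Matrix.Norms.Frobenius

variable {𝕜 m n : Type*} [RCLike 𝕜] [Fintype m] [Fintype n]

theorem frobenius_norm_sq {α : Type*} [SeminormedAddCommGroup α] (A : Matrix m n α) :
    ‖A‖ ^ 2 = ∑ i, ∑ j, ‖A i j‖ ^ 2 := by
  rw [frobenius_norm_def, ← Real.sqrt_eq_rpow, Real.sq_sqrt (by positivity)]
  simp only [Real.rpow_two]

theorem trace_mul_conjTranspose_self_eq_norm_sq (A : Matrix m n 𝕜) :
    (A * Aᴴ).trace = (‖A‖ ^ 2 : ℝ) := by
  simp [frobenius_norm_sq, trace, mul_apply, RCLike.mul_conj]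

theorem norm_trace_mul_le {α : Type*} [SeminormedRing α] (A : Matrix m n α) (B : Matrix n m α) :
    ‖(A * B).trace‖ ≤ ‖A‖ * ‖B‖ := by
  have triangle : ‖(A * B).trace‖ ≤ ∑ p : m × n, ‖A p.1 p.2‖ * ‖B p.2 p.1‖ := by
    simp only [trace, diag_apply, mul_apply, ← Fintype.sum_prod_type']
    exact norm_sum_le_of_le _ fun p _ ↦ norm_mul_le _ _
  have cauchy_schwarz :
      (∑ p : m × n, ‖A p.1 p.2‖ * ‖B p.2 p.1‖) ^ 2 ≤ (‖A‖ * ‖B‖) ^ 2 := by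
    rw [mul_pow, ← frobenius_norm_transpose B, frobenius_norm_sq, frobenius_norm_sq,
      ← Fintype.sum_prod_type', ← Fintype.sum_prod_type']
    exact Finset.sum_mul_sq_le_sq_mul_sq _ _ _
  exact triangle.trans (le_of_sq_le_sq cauchy_schwarz (by positivity))

theorem norm_trace_mul_mul_le {l : Type*} [Fintype l] (A : Matrix l m 𝕜) (B : Matrix m n 𝕜)
    (C : Matrix n l 𝕜) : ‖(A * B * C).trace‖ ≤ ‖A‖ * ‖B‖ * ‖C‖ :=
  calc ‖(A * B * C).trace‖ ≤ ‖A * B‖ * ‖C‖ := norm_trace_mul_le _ _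
    _ ≤ ‖A‖ * ‖B‖ * ‖C‖ := by gcongr; exact frobenius_norm_mul A B

theorem re_trace_mul_self_eq_norm_sq {A : Matrix n n 𝕜} (hA : A.IsHermitian) :
    RCLike.re (A * A).trace = ‖A‖ ^ 2 := by
  have h := trace_mul_conjTranspose_self_eq_norm_sq A
  rw [hA.eq] at h
  rw [h, RCLike.ofReal_re]

end FrobeniusNorm

theorem mul_le_half_mul_sq_add {c : ℝ} (hc : 0 < c) (k x : ℝ) :
    k * x ≤ c / 2 * x ^ 2 + k ^ 2 / (2 * c) := by
  have square : c / 2 * x ^ 2 + k ^ 2 / (2 * c) - k * x = (c * x - k) ^ 2 / (2 * c) := by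
    field_simp
    ring
  have : 0 ≤ (c * x - k) ^ 2 / (2 * c) := by positivity
  linarith

theorem exists_quartic_lower_bound (a b : ℝ) {c : ℝ} (hc : 0 < c) :
    ∃ C₁ > (0 : ℝ), ∃ C₂ > (0 : ℝ), ∀ r : ℝ,
      C₁ * r ^ 4 - C₂ ≤ -a * r ^ 2 - b * r ^ 3 + c * r ^ 4 := by
  set k := a + b ^ 2 / c with hk
  refine ⟨c / 4, by positivity, k ^ 2 / (2 * c) + 1, by positivity, fun r ↦ ?_⟩
  have cubic : b * r ^ 3 ≤ c / 4 * r ^ 4 + b ^ 2 / c * r ^ 2 := by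
    have young := mul_le_half_mul_sq_add (half_pos hc) b r
    calc b * r ^ 3 = b * r * r ^ 2 := by ring
      _ ≤ (c / 2 / 2 * r ^ 2 + b ^ 2 / (2 * (c / 2))) * r ^ 2 := by gcongr
      _ = c / 4 * r ^ 4 + b ^ 2 / c * r ^ 2 := by ring
  have quadratic : a * r ^ 2 + b ^ 2 / c * r ^ 2 ≤ c / 2 * r ^ 4 + k ^ 2 / (2 * c) :=
    calc a * r ^ 2 + b ^ 2 / c * r ^ 2 = k * r ^ 2 := by rw [hk, add_mul]
      _ ≤ c / 2 * (r ^ 2) ^ 2 + k ^ 2 / (2 * c) := mul_le_half_mul_sq_add hc k (r ^ 2)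
      _ = c / 2 * r ^ 4 + k ^ 2 / (2 * c) := by ring
  linarith

open scoped Matrix.Norms.Frobenius in
theorem statement3_general {𝕜 n : Type*} [RCLike 𝕜] [Fintype n] (a b : ℝ) {c : ℝ} (hc : 0 < c) :
    ∃ C₁ > (0 : ℝ), ∃ C₂ > (0 : ℝ), ∀ Q : Matrix n n 𝕜, Q.IsHermitian →
      C₁ * RCLike.re (Q * Q).trace ^ 2 - C₂ ≤
        -a * RCLike.re (Q * Q).trace - b * RCLike.re (Q * Q * Q).trace +
          c * RCLike.re (Q * Q).trace ^ 2 := by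
  obtain ⟨C₁, hC₁, C₂, hC₂, quartic⟩ := exists_quartic_lower_bound a |b| hc
  refine ⟨C₁, hC₁, C₂, hC₂, fun Q hQ ↦ ?_⟩
  have cubic : b * RCLike.re (Q * Q * Q).trace ≤ |b| * ‖Q‖ ^ 3 :=
    calc b * RCLike.re (Q * Q * Q).trace ≤ |b| * |RCLike.re (Q * Q * Q).trace| :=
          (le_abs_self _).trans_eq (abs_mul _ _)
      _ ≤ |b| * (‖Q‖ * ‖Q‖ * ‖Q‖) := by
          gcongr
          exact (RCLike.abs_re_le_norm _).trans (norm_trace_mul_mul_le Q Q Q)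
      _ = |b| * ‖Q‖ ^ 3 := by ring
  rw [re_trace_mul_self_eq_norm_sq hQ]
  linarith [quartic ‖Q‖]

theorem statement3 (a b c : ℝ) (ha : 0 < a) (hb : 0 < b) (hc : 0 < c) :
    ∃ C₁ > (0 : ℝ), ∃ C₂ > (0 : ℝ), ∀ Q ∈ Sym0,
      C₁ * ((Q * Q).trace) ^ 2 - C₂ ≤
        -a * (Q * Q).trace - b * (Q * Q * Q).trace + c * ((Q * Q).trace) ^ 2 := by
  obtain ⟨C₁, hC₁, C₂, hC₂, bound⟩ := statement3_general (𝕜 := ℝ) (n := Fin 3) a b hc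
  exact ⟨C₁, hC₁, C₂, hC₂, fun Q hQ ↦ bound Q (isHermitian_iff_isSymm.mpr hQ.1)⟩
end
end

section
/- There exist R ≥ √(2/3)·s* and t₀ > 0 such that for every t ∈ [0, t₀] and every Q ∈ Sym₀, f(Π_R Q) + t·g(Π_R Q) ≤ f(Q) + t·g(Q), where Π_R denotes the nearest-point projection of Sym₀ onto the closed ball { P ∈ Sym₀ : |P| ≤ R }. -/
/- STATEMENT 7: There exist R ≥ √(2/3)·s* and t₀ > 0 such that for every t ∈ [0, t₀]
and every Q ∈ Sym₀, f(Π_R Q) + t·g(Π_R Q) ≤ f(Q) + t·g(Q), where Π_R is the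
nearest-point projection onto the closed Frobenius ball of radius R. -/

noncomputable section

open Matrix

def gMag (sS : ℝ) (Q : Mat3) : ℝ := 2 / 3 * sS - Q 2 2

def frob (A : Mat3) : ℝ := Real.sqrt (∑ i, ∑ j, (A i j) ^ 2)

/-- Nearest-point projection (in Frobenius norm) onto the closed ball of radius R. -/
def PiR (R : ℝ) (Q : Mat3) : Mat3 := if frob Q ≤ R then Q else (R / frob Q) • Q

/-! On the ray through a symmetric unit matrix `U`, the function `f + t g` is the quartic
`c/4 r⁴ - (b tr U³)/3 r³ - a/2 r² - t U₃₃ r + const` in `r`. Since `|tr U³| ≤ 1` and `|U₃₃| ≤ 1`,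
its coefficients are bounded uniformly in `U` and in bounded `t`, so for `R` large it increases on
`[R, ∞)` along every ray, and `Π_R` only moves points inwards along rays. -/

section FrobeniusNorm

open scoped Matrix.Norms.Frobenius

variable {m n α 𝕜 : Type*} [Fintype m] [Fintype n]

theorem norm_apply_le_frobenius_norm [SeminormedAddCommGroup α] (A : Matrix m n α) (i : m)
    (j : n) : ‖A i j‖ ≤ ‖A‖ :=
  (PiLp.norm_apply_le (WithLp.toLp 2 (A i)) j).trans
    (PiLp.norm_apply_le (WithLp.toLp 2 fun i => WithLp.toLp 2 (A i)) i)

theorem frobenius_norm_eq_sqrt [SeminormedAddCommGroup α] (A : Matrix m n α) :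
    ‖A‖ = √(∑ i, ∑ j, ‖A i j‖ ^ 2) := by
  rw [frobenius_norm_def, Real.sqrt_eq_rpow]
  simp only [Real.rpow_two]

theorem norm_trace_mul_le_frobenius_norm_mul [SeminormedRing α] (A : Matrix m n α)
    (B : Matrix n m α) : ‖(A * B).trace‖ ≤ ‖A‖ * ‖B‖ :=
  calc ‖(A * B).trace‖ = ‖∑ p : m × n, A p.1 p.2 * Bᵀ p.1 p.2‖ := by
        simp only [trace, diag_apply, mul_apply, transpose_apply, Fintype.sum_prod_type]
    _ ≤ ∑ p : m × n, ‖A p.1 p.2‖ * ‖Bᵀ p.1 p.2‖ :=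
        norm_sum_le_of_le _ fun _ _ => norm_mul_le _ _
    _ ≤ √(∑ p : m × n, ‖A p.1 p.2‖ ^ 2) * √(∑ p : m × n, ‖Bᵀ p.1 p.2‖ ^ 2) :=
        Real.sum_mul_le_sqrt_mul_sqrt _ _ _
    _ = ‖A‖ * ‖Bᵀ‖ := by simp only [frobenius_norm_eq_sqrt, Fintype.sum_prod_type]
    _ = ‖A‖ * ‖B‖ := by rw [frobenius_norm_transpose]

theorem trace_mul_conjTranspose_self_eq_frobenius_norm_sq [RCLike 𝕜] (A : Matrix m n 𝕜) :
    (A * Aᴴ).trace = (‖A‖ : 𝕜) ^ 2 := by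
  rw [frobenius_norm_eq_sqrt, ← RCLike.ofReal_pow, Real.sq_sqrt (by positivity)]
  simp only [trace, diag_apply, mul_apply, conjTranspose_apply, RCLike.star_def, RCLike.mul_conj,
    RCLike.ofReal_sum, RCLike.ofReal_pow]

theorem frob_eq_frobenius_norm (Q : Mat3) : frob Q = ‖Q‖ := by
  simp only [frob, frobenius_norm_eq_sqrt, Real.norm_eq_abs, sq_abs]

theorem frob_smul (r : ℝ) (Q : Mat3) : frob (r • Q) = |r| * frob Q := by
  simp only [frob_eq_frobenius_norm, norm_smul, Real.norm_eq_abs]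

theorem abs_apply_le_frob (Q : Mat3) (i j : Fin 3) : |Q i j| ≤ frob Q := by
  rw [frob_eq_frobenius_norm]
  exact norm_apply_le_frobenius_norm Q i j

theorem trace_mul_self_eq_frob_sq {Q : Mat3} (hQ : Q.IsSymm) : (Q * Q).trace = frob Q ^ 2 := by
  rw [frob_eq_frobenius_norm]
  simpa [conjTranspose_eq_transpose_of_trivial, hQ.eq] using
    trace_mul_conjTranspose_self_eq_frobenius_norm_sq Q

theorem abs_trace_cube_le_frob_pow (Q : Mat3) : |(Q * Q * Q).trace| ≤ frob Q ^ 3 := by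
  rw [frob_eq_frobenius_norm, ← Real.norm_eq_abs]
  calc ‖(Q * Q * Q).trace‖ ≤ ‖Q * Q‖ * ‖Q‖ := norm_trace_mul_le_frobenius_norm_mul _ _
    _ ≤ ‖Q‖ * ‖Q‖ * ‖Q‖ := by gcongr; exact frobenius_norm_mul Q Q
    _ = ‖Q‖ ^ 3 := by ring

end FrobeniusNorm

theorem PiR_eq_smul_of_lt_frob {R : ℝ} {Q : Mat3} (h : R < frob Q) :
    PiR R Q = R • (frob Q)⁻¹ • Q := by
  rw [PiR, if_neg h.not_ge, smul_smul, div_eq_mul_inv]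

theorem quadratic_le_cubic {a b c d R r : ℝ} (hR : 1 ≤ R) (h : |a| + |b| + |d| ≤ c * R)
    (hr : R ≤ r) : b * r ^ 2 + a * r + d ≤ c * r ^ 3 := by
  have hr1 : 1 ≤ r := hR.trans hr
  have hc : 0 ≤ c :=
    nonneg_of_mul_nonneg_left (le_trans (by positivity) h) (zero_lt_one.trans_le hR)
  calc b * r ^ 2 + a * r + d ≤ |b| * r ^ 2 + |a| * r + |d| := by
        gcongr <;> exact le_abs_self _
    _ ≤ |b| * r ^ 2 + |a| * r ^ 2 + |d| * r ^ 2 := by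
        gcongr
        · exact le_self_pow₀ hr1 two_ne_zero
        · exact le_mul_of_one_le_right (abs_nonneg d) (one_le_pow₀ hr1)
    _ = (|a| + |b| + |d|) * r ^ 2 := by ring
    _ ≤ c * r * r ^ 2 := by
        gcongr
        exact h.trans (by gcongr)
    _ = c * r ^ 3 := by ring

theorem monotoneOn_quartic_Ici {a b c d R : ℝ} (e : ℝ) (hR : 1 ≤ R)
    (h : |a| + |b| + |d| ≤ c * R) :
    MonotoneOn (fun r : ℝ => c / 4 * r ^ 4 - b / 3 * r ^ 3 - a / 2 * r ^ 2 - d * r + e)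
      (Set.Ici R) := by
  have hderiv (r : ℝ) :
      HasDerivAt (fun r : ℝ => c / 4 * r ^ 4 - b / 3 * r ^ 3 - a / 2 * r ^ 2 - d * r + e)
        (c * r ^ 3 - b * r ^ 2 - a * r - d) r := by
    refine HasDerivAt.congr_deriv ((((((hasDerivAt_pow 4 r).const_mul (c / 4)).sub
      ((hasDerivAt_pow 3 r).const_mul (b / 3))).sub
      ((hasDerivAt_pow 2 r).const_mul (a / 2))).sub
      ((hasDerivAt_id r).const_mul d)).add_const e) ?_
    push_cast
    ring
  refine monotoneOn_of_hasDerivWithinAt_nonneg (convex_Ici R)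
    (fun r _ => (hderiv r).continuousAt.continuousWithinAt)
    (fun r _ => (hderiv r).hasDerivWithinAt) fun r hr => ?_
  rw [interior_Ici] at hr
  linarith [quadratic_le_cubic hR h hr.le]

theorem fLdG_add_mul_gMag_smul (a b c C s t r : ℝ) {U : Mat3} (hU : U.IsSymm)
    (hU1 : frob U = 1) :
    fLdG a b c C (r • U) + t * gMag s (r • U) =
      c / 4 * r ^ 4 - b * (U * U * U).trace / 3 * r ^ 3 - a / 2 * r ^ 2 - t * U 2 2 * r +
        (C + t * (2 / 3 * s)) := by
  have htr : (U * U).trace = 1 := by rw [trace_mul_self_eq_frob_sq hU, hU1, one_pow]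
  simp only [fLdG, gMag, Matrix.smul_mul, Matrix.mul_smul, trace_smul, Matrix.smul_apply,
    smul_eq_mul, htr]
  ring

theorem monotoneOn_fLdG_add_mul_gMag_smul {a b c t R : ℝ} (C s : ℝ) {U : Mat3} (hU : U.IsSymm)
    (hU1 : frob U = 1) (hR : 1 ≤ R) (h : |a| + |b| + |t| ≤ c * R) :
    MonotoneOn (fun r : ℝ => fLdG a b c C (r • U) + t * gMag s (r • U)) (Set.Ici R) := by
  simp only [fLdG_add_mul_gMag_smul a b c C s t _ hU hU1]
  have hcubic : |b * (U * U * U).trace| ≤ |b| := by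
    rw [abs_mul]
    exact mul_le_of_le_one_right (abs_nonneg b) (by simpa [hU1] using abs_trace_cube_le_frob_pow U)
  have hlinear : |t * U 2 2| ≤ |t| := by
    rw [abs_mul]
    exact mul_le_of_le_one_right (abs_nonneg t) (hU1 ▸ abs_apply_le_frob U 2 2)
  exact monotoneOn_quartic_Ici _ hR (by linarith)

theorem statement7_general (a b C s t₀ : ℝ) {c : ℝ} (hc : 0 < c) :
    ∀ᶠ R in Filter.atTop, ∀ t : ℝ, |t| ≤ t₀ → ∀ Q : Mat3, Q.IsSymm →
      fLdG a b c C (PiR R Q) + t * gMag s (PiR R Q) ≤ fLdG a b c C Q + t * gMag s Q := by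
  filter_upwards [Filter.eventually_ge_atTop 1,
    Filter.eventually_ge_atTop ((|a| + |b| + t₀) / c)] with R hR1 hR t ht Q hQ
  rcases le_or_gt (frob Q) R with hle | hlt
  · rw [PiR, if_pos hle]
  have hpos : 0 < frob Q := by linarith
  have hunit : frob ((frob Q)⁻¹ • Q) = 1 := by
    rw [frob_smul, abs_of_pos (inv_pos.2 hpos), inv_mul_cancel₀ hpos.ne']
  have hcoeff : |a| + |b| + |t| ≤ c * R := by
    rw [div_le_iff₀' hc] at hR
    linarith
  have hmono := monotoneOn_fLdG_add_mul_gMag_smul C s (hQ.smul (frob Q)⁻¹) hunit hR1 hcoeff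
    Set.self_mem_Ici hlt.le hlt.le
  simpa only [← PiR_eq_smul_of_lt_frob hlt, smul_inv_smul₀ hpos.ne'] using hmono

theorem statement7 (a b c C : ℝ) (ha : 0 < a) (hb : 0 < b) (hc : 0 < c)
    (hC : IsLeast (fLdG a b c C '' Sym0) 0) :
    ∃ R : ℝ, Real.sqrt (2 / 3) * sStar a b c ≤ R ∧
      ∃ t₀ > (0 : ℝ), ∀ t : ℝ, 0 ≤ t → t ≤ t₀ → ∀ Q ∈ Sym0,
        fLdG a b c C (PiR R Q) + t * gMag (sStar a b c) (PiR R Q) ≤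
          fLdG a b c C Q + t * gMag (sStar a b c) Q := by
  obtain ⟨R, hR, hle⟩ := ((Filter.eventually_ge_atTop (√(2 / 3) * sStar a b c)).and
    (statement7_general a b C (sStar a b c) 1 hc)).exists
  exact ⟨R, hR, 1, one_pos, fun t ht₀ ht₁ Q hQ => hle t ((abs_of_nonneg ht₀).trans_le ht₁) Q hQ.1⟩
end
end
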